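/- arXiv:math/0608664 — 2 statements merged into one kernel-verified Lean document; each statement's English description precedes it below -/
import Mathlib

section
/- Let G and G' be subgroups of (Z/p^k Z)^{2g}, each isomorphic to (Z/p^k Z)^m, equipped with the restriction of the standard symplectic form (.,.)_{p^k}, and let ψ: G → G' be an isomorphism satisfying (ψ(a), ψ(b))_{p^k} = (a, b)_{p^k} for all a, b ∈ G. Then ψ extends to an automorphism of (Z/p^k Z)^{2g} preserving the form (.,.)_{p^k}. -/
open scoped Matrix

def sympJ (g : ℕ) (R : Type) [CommRing R] : Matrix (Fin (2*g)) (Fin (2*g)) R :=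
  fun i j => if (i : ℕ) + (j : ℕ) = 2*g - 1 then (if (i : ℕ) < (j : ℕ) then 1 else -1) else 0

def symp (g : ℕ) (R : Type) [CommRing R] (x y : Fin (2*g) → R) : R :=
  x ⬝ᵥ (sympJ g R).mulVec y

theorem aux_baer (n : ℕ) (hn : n ≠ 0) : Module.Baer (ZMod n) (ZMod n) := by
  have : NeZero n := ⟨hn⟩
  have : IsPrincipalIdealRing (ZMod n) :=
    IsPrincipalIdealRing.of_surjective (Int.castRingHom (ZMod n)) ZMod.intCast_surjective
  intro I f
  obtain ⟨a, ha⟩ := (IsPrincipalIdealRing.principal I).principal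
  have haI : a ∈ I := by rw [ha]; exact Submodule.mem_span_singleton_self a
  obtain ⟨y, hy⟩ : ∃ y, y = f ⟨a, haI⟩ := ⟨_, rfl⟩
  have hr : ∀ r : ZMod n, r * a = 0 → r * y = 0 := by
    intro r h
    have : r • (⟨a, haI⟩ : I) = 0 := by ext; simpa using h
    rw [hy, ← smul_eq_mul, ← map_smul, this, map_zero]
  obtain ⟨z, hz⟩ : ∃ z, y = z * a := by
    obtain ⟨A, rfl⟩ := ZMod.natCast_zmod_surjective a
    obtain ⟨Y, rfl⟩ := ZMod.natCast_zmod_surjective y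
    obtain ⟨q, hq⟩ := Nat.gcd_dvd_right A n
    obtain ⟨b, hb⟩ := Nat.gcd_dvd_left A n
    have hd : A.gcd n ≠ 0 := fun h => hn (by rw [Nat.gcd_eq_zero_iff] at h; exact h.2)
    have hq0 : q ≠ 0 := by rintro rfl; exact hn (by simpa using hq)
    have h1 : ((q : ℕ) : ZMod n) * (A : ZMod n) = 0 := by
      rw [← Nat.cast_mul, ZMod.natCast_eq_zero_iff]
      refine ⟨b, ?_⟩
      calc q * A = q * (A.gcd n * b) := by rw [← hb]
        _ = (A.gcd n * q) * b := by ring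
        _ = n * b := by rw [← hq]
    have h2 := hr _ h1
    rw [← Nat.cast_mul, ZMod.natCast_eq_zero_iff] at h2
    have h3 : A.gcd n ∣ Y := by
      have h2 : q * A.gcd n ∣ q * Y := by rwa [mul_comm q (A.gcd n), ← hq]
      have := Nat.dvd_of_mul_dvd_mul_left (Nat.pos_of_ne_zero hq0) h2
      exact this
    obtain ⟨t, rfl⟩ := h3
    have h4 := congrArg (Int.cast : ℤ → ZMod n) (Nat.gcd_eq_gcd_ab A n)
    push_cast at h4
    refine ⟨(A.gcdA n : ZMod n) * t, ?_⟩
    push_cast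
    rw [h4]
    simp
    ring
  refine ⟨LinearMap.toSpanSingleton (ZMod n) (ZMod n) z, ?_⟩
  intro x hx
  obtain ⟨r, rfl⟩ : ∃ r, r • a = x := by
    rw [ha] at hx; exact Submodule.mem_span_singleton.1 hx
  have : (⟨r • a, hx⟩ : I) = r • (⟨a, haI⟩ : I) := rfl
  rw [this, f.map_smul, ← hy, hz]
  simp
  ring

section abstract_part
variable {R V : Type} [CommRing R] [AddCommGroup V] [Module R V]

def auxSp (B : V →ₗ[R] V →ₗ[R] R) (T : V ≃ₗ[R] V) : Prop := ∀ x y, B (T x) (T y) = B x y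

theorem aux_transv (B : V →ₗ[R] V →ₗ[R] R) (hB : ∀ x, B x x = 0) (u : V) (c : R) :
    ∃ T : V ≃ₗ[R] V, auxSp B T ∧ ∀ v, T v = v + (c * B u v) • u := by
  have key : ∀ (c : R), ∃ f : V →ₗ[R] V, ∀ v, f v = v + (c * B u v) • u := by
    intro c
    refine ⟨LinearMap.id + (c • B u).smulRight u, fun v => by simp⟩
  obtain ⟨f, hf⟩ := key c
  obtain ⟨f', hf'⟩ := key (-c)
  have hsk : ∀ x y, B x y = - B y x := by
    intro x y
    have := hB (x + y)
    simp [hB] at this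
    linear_combination this
  refine ⟨LinearEquiv.ofLinearMap f f' ?_ ?_, ?_, fun v => hf v⟩
  · refine LinearMap.ext fun v => ?_
    simp [hf, hf', hB]
  · refine LinearMap.ext fun v => ?_
    simp [hf, hf', hB]
  · intro x y
    simp [hf, hB]
    rw [hsk x u]
    ring

theorem aux_move [IsLocalRing R] (B : V →ₗ[R] V →ₗ[R] R) (hB : ∀ x, B x x = 0) (S : Set V)
    (x y : V) (hS : ∀ s ∈ S, B s x = B s y)
    (hx : ∃ w, B x w = 1 ∧ ∀ s ∈ S, B s w = 0) (hy : ∃ w, B y w = 1 ∧ ∀ s ∈ S, B s w = 0) :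
    ∃ T : V ≃ₗ[R] V, auxSp B T ∧ (∀ s ∈ S, T s = s) ∧ T x = y := by
  have hsk : ∀ x y, B x y = - B y x := by
    intro x y
    have := hB (x + y)
    simp [hB] at this
    linear_combination this
  have step : ∀ x y : V, (∀ s ∈ S, B s x = B s y) → IsUnit (B y x) →
      ∃ T : V ≃ₗ[R] V, auxSp B T ∧ (∀ s ∈ S, T s = s) ∧ T x = y := by
    intro x y hS hu
    obtain ⟨c, hc⟩ := hu.exists_left_inv
    obtain ⟨T, hT, hTv⟩ := aux_transv B hB (y - x) c
    refine ⟨T, hT, fun s hs => ?_, ?_⟩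
    · rw [hTv, hsk, map_sub, hS s hs]; simp
    · rw [hTv]; simp [hB, hc]
  by_cases h : IsUnit (B y x)
  · exact step x y hS h
  have hunit : ∀ a b : R, IsUnit a → ¬ IsUnit b → IsUnit (a + b) := by
    intro a b ha hb
    by_contra hab
    have h2 : ¬ IsUnit (-b) := by simpa using hb
    have := IsLocalRing.nonunits_add (R := R) hab h2
    simp at this
    exact this ha
  obtain ⟨w, hw1, hw2, hw3⟩ : ∃ w, IsUnit (B x w) ∧ IsUnit (B y w) ∧ ∀ s ∈ S, B s w = 0 := by
    obtain ⟨w, hw, hwS⟩ := hx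
    obtain ⟨w', hw', hwS'⟩ := hy
    by_cases h1 : IsUnit (B y w)
    · exact ⟨w, by rw [hw]; exact isUnit_one, h1, hwS⟩
    by_cases h2 : IsUnit (B x w')
    · exact ⟨w', h2, by rw [hw']; exact isUnit_one, hwS'⟩
    refine ⟨w + w', ?_, ?_, fun s hs => by simp [hwS s hs, hwS' s hs]⟩
    · rw [map_add]; exact hunit _ _ (by rw [hw]; exact isUnit_one) h2
    · rw [map_add, add_comm]; exact hunit _ _ (by rw [hw']; exact isUnit_one) h1
  obtain ⟨T1, hT1, hT1S, hT1x⟩ := step x (x + w) (fun s hs => by simp [hw3 s hs])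
    (by simp only [map_add, LinearMap.add_apply, hB, zero_add]; rw [hsk]; exact hw1.neg)
  obtain ⟨T2, hT2, hT2S, hT2x⟩ := step (x + w) y (fun s hs => by simp [hw3 s hs, hS s hs])
    (by rw [map_add, add_comm]; exact hunit _ _ hw2 h)
  refine ⟨T1.trans T2, fun a b => ?_, fun s hs => ?_, ?_⟩
  · simp [hT2 _ _, hT1 _ _]
  · simp [hT1S s hs, hT2S s hs]
  · simp [hT1x, hT2x]

theorem aux_witt [IsLocalRing R] (B : V →ₗ[R] V →ₗ[R] R) (hB : ∀ x, B x x = 0) (m : ℕ)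
    (x y : Fin m → V) (hxy : ∀ i j, B (x i) (x j) = B (y i) (y j))
    (hx : ∀ c : Fin m → R, ∃ w, ∀ i, B (x i) w = c i)
    (hy : ∀ c : Fin m → R, ∃ w, ∀ i, B (y i) w = c i) (j : ℕ) (hj : j ≤ m) :
    ∃ T : V ≃ₗ[R] V, auxSp B T ∧ ∀ i : Fin m, (i : ℕ) < j → T (x i) = y i := by
  induction j with
  | zero => exact ⟨LinearEquiv.refl R V, fun _ _ => rfl, fun i hi => absurd hi (by omega)⟩
  | succ j ih =>
    obtain ⟨T, hT, hTx⟩ := ih (by omega)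
    let q : Fin m := ⟨j, by omega⟩
    have hne : ∀ i : Fin m, (i : ℕ) < j → i ≠ q := by
      rintro i hi rfl; simp [q] at hi
    obtain ⟨T', hT', hS', hx'⟩ := aux_move B hB (y '' {i | (i : ℕ) < j}) (T (x q)) (y q)
      (by
        rintro _ ⟨i, hi, rfl⟩
        rw [← hTx i hi, hT, hxy, hTx i hi])
      (by
        obtain ⟨w, hw⟩ := hx (Pi.single q 1)
        refine ⟨T w, by rw [hT, hw]; simp, ?_⟩
        rintro _ ⟨i, hi, rfl⟩
        rw [← hTx i hi, hT, hw]
        simp [hne i hi])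
      (by
        obtain ⟨w, hw⟩ := hy (Pi.single q 1)
        refine ⟨w, by rw [hw]; simp, ?_⟩
        rintro _ ⟨i, hi, rfl⟩
        rw [hw]
        simp [hne i hi])
    refine ⟨T.trans T', fun a b => ?_, fun i hi => ?_⟩
    · simp [hT' _ _, hT _ _]
    · rcases Nat.lt_succ_iff_lt_or_eq.1 hi with h | h
      · simp only [LinearEquiv.trans_apply, hTx i h]
        exact hS' _ ⟨i, h, rfl⟩
      · have : i = q := Fin.ext h
        subst this
        simpa using hx'

end abstract_part

theorem aux_mulVec (g : ℕ) (R : Type) [CommRing R] (y : Fin (2*g) → R) (i : Fin (2*g)) :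
    (sympJ g R).mulVec y i = (if (i : ℕ) < (i.rev : ℕ) then 1 else -1) * y i.rev := by
  unfold Matrix.mulVec dotProduct
  rw [Finset.sum_eq_single i.rev]
  · have : (i : ℕ) + (i.rev : ℕ) = 2 * g - 1 := by simp [Fin.val_rev]; omega
    simp only [sympJ, this, if_true]
  · intro b _ hb
    have : ¬ ((i : ℕ) + (b : ℕ) = 2 * g - 1) := by
      intro h
      apply hb
      ext
      simp [Fin.val_rev]; omega
    simp [sympJ, this]
  · simp

theorem aux_symp_eq (g : ℕ) (R : Type) [CommRing R] (x y : Fin (2*g) → R) :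
    symp g R x y = ∑ i, x i * ((if (i : ℕ) < (i.rev : ℕ) then 1 else -1) * y i.rev) := by
  unfold symp dotProduct
  simp only [aux_mulVec]

theorem aux_symp_alt (g : ℕ) (R : Type) [CommRing R] (x : Fin (2*g) → R) :
    symp g R x x = 0 := by
  rw [aux_symp_eq]
  refine Finset.sum_involution (fun i _ => i.rev) ?_ ?_ (fun _ _ => Finset.mem_univ _) ?_
  · intro i _
    rw [Fin.rev_rev]
    have h : (i.rev : ℕ) = 2 * g - (i + 1) := Fin.val_rev i
    by_cases h1 : (i : ℕ) < (i.rev : ℕ)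
    · have h2 : ¬ ((i.rev : ℕ) < i) := by omega
      simp only [h1, h2, if_true, if_false]; ring
    · have h2 : ((i.rev : ℕ) < i) := by omega
      simp only [h1, h2, if_true, if_false]; ring
  · intro i _ _ h
    have h1 : (i.rev : ℕ) = 2 * g - (i + 1) := Fin.val_rev i
    rw [h] at h1
    omega
  · intro i _; exact Fin.rev_rev i

theorem aux_symp_repr (g : ℕ) (R : Type) [CommRing R] (f : (Fin (2*g) → R) →ₗ[R] R) :
    ∃ w, ∀ x, symp g R x w = f x := by
  refine ⟨fun j => (if (j.rev : ℕ) < (j : ℕ) then 1 else -1) * f (Pi.single j.rev 1), fun x => ?_⟩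
  rw [aux_symp_eq, LinearMap.pi_apply_eq_sum_univ f x]
  refine Finset.sum_congr rfl fun i _ => ?_
  have : (fun j => if i = j then (1 : R) else 0) = Pi.single i 1 := by
    ext j; simp [Pi.single_apply, eq_comm]
  simp only [Fin.rev_rev, smul_eq_mul, this]
  split_ifs <;> simp

def auxB (g : ℕ) (R : Type) [CommRing R] :
    (Fin (2*g) → R) →ₗ[R] (Fin (2*g) → R) →ₗ[R] R :=
  LinearMap.mk₂ R (symp g R)
    (by intros; simp [symp, add_dotProduct])
    (by intros; simp [symp, smul_dotProduct])
    (by intros; simp [symp, Matrix.mulVec_add, dotProduct_add])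
    (by intros; simp [symp, Matrix.mulVec_smul, dotProduct_smul])

theorem aux_prescribe (n : ℕ) (hn : n ≠ 0) (g m : ℕ)
    (G : Submodule (ZMod n) (Fin (2*g) → ZMod n))
    (e : G ≃ₗ[ZMod n] (Fin m → ZMod n)) (c : Fin m → ZMod n) :
    ∃ w, ∀ i, auxB g (ZMod n) (e.symm (Pi.single i 1) : G) w = c i := by
  have := (aux_baer n hn).injective
  let φ : G →ₗ[ZMod n] ZMod n := (∑ i, c i • LinearMap.proj i) ∘ₗ e.toLinearMap
  obtain ⟨f, hf⟩ := Module.Injective.out G.subtype G.injective_subtype φ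
  obtain ⟨w, hw⟩ := aux_symp_repr g (ZMod n) f
  refine ⟨w, fun i => ?_⟩
  have := hf (e.symm (Pi.single i 1))
  refine ((hw _).trans this).trans ?_
  simp [φ, Pi.single_apply]

/-- Edmonds' extension theorem: an isomorphism between two submodules of
`(ℤ/p^kℤ)^{2g}` isomorphic to `(ℤ/p^kℤ)^m` that preserves the standard symplectic form
extends to a symplectic automorphism of `(ℤ/p^kℤ)^{2g}`. -/
theorem stmt3 (p k g m : ℕ) (hp : p.Prime) (hk : 1 ≤ k) (hm : m ≤ 2*g)
    (G G' : Submodule (ZMod (p^k)) (Fin (2*g) → ZMod (p^k)))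
    (eG : G ≃ₗ[ZMod (p^k)] (Fin m → ZMod (p^k)))
    (eG' : G' ≃ₗ[ZMod (p^k)] (Fin m → ZMod (p^k)))
    (ψ : G ≃ₗ[ZMod (p^k)] G')
    (hψ : ∀ a b : G,
      symp g (ZMod (p^k)) ((ψ a : Fin (2*g) → ZMod (p^k))) ((ψ b : Fin (2*g) → ZMod (p^k)))
        = symp g (ZMod (p^k)) (a : Fin (2*g) → ZMod (p^k)) (b : Fin (2*g) → ZMod (p^k))) :
    ∃ Ψ : (Fin (2*g) → ZMod (p^k)) ≃ₗ[ZMod (p^k)] (Fin (2*g) → ZMod (p^k)),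
      (∀ x y, symp g (ZMod (p^k)) (Ψ x) (Ψ y) = symp g (ZMod (p^k)) x y) ∧
      (∀ a : G, Ψ (a : Fin (2*g) → ZMod (p^k)) = (ψ a : Fin (2*g) → ZMod (p^k))) := by
  have : Fact p.Prime := ⟨hp⟩
  have hn : p ^ k ≠ 0 := pow_ne_zero _ hp.ne_zero
  have : NeZero (p ^ k) := ⟨hn⟩
  have : IsLocalRing (ZMod (p ^ k)) := by
    have : Nontrivial (ZMod (p ^ k)) := by
      apply ZMod.nontrivial_iff.2
      have := Nat.one_lt_pow (by omega : k ≠ 0) hp.one_lt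
      omega
    refine IsLocalRing.of_nonunits_add ?_
    have hu : ∀ a : ℕ, ((a : ZMod (p ^ k)) ∈ nonunits (ZMod (p ^ k))) ↔ p ∣ a := by
      intro a
      rw [mem_nonunits_iff, ZMod.isUnit_iff_coprime, Nat.coprime_pow_right_iff (by omega),
        Nat.coprime_comm, hp.coprime_iff_not_dvd, not_not]
    intro a b ha hb
    obtain ⟨a, rfl⟩ := ZMod.natCast_zmod_surjective a
    obtain ⟨b, rfl⟩ := ZMod.natCast_zmod_surjective b
    rw [← Nat.cast_add, hu]
    exact dvd_add ((hu a).1 ha) ((hu b).1 hb)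
  obtain ⟨T, hT, hTx⟩ := aux_witt (auxB g (ZMod (p ^ k)))
    (fun x => aux_symp_alt g _ x) m
    (fun i => (eG.symm (Pi.single i 1) : G)) (fun i => (ψ (eG.symm (Pi.single i 1)) : G'))
    (fun i j => (hψ _ _).symm) (aux_prescribe _ hn g m G eG)
    (aux_prescribe _ hn g m G' (ψ.symm.trans eG)) m le_rfl
  refine ⟨T, fun x y => hT x y, ?_⟩
  have h : (T.toLinearMap ∘ₗ G.subtype) ∘ₗ eG.symm.toLinearMap
      = (G'.subtype ∘ₗ ψ.toLinearMap) ∘ₗ eG.symm.toLinearMap := by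
    refine LinearMap.pi_ext' fun i => LinearMap.ext_ring ?_
    exact hTx i i.2
  intro a
  simpa using LinearMap.congr_fun h (eG a)
end

section
/- Two alternating bilinear forms on G = (Z/p^k Z)^m are equivalent under the action of Aut(G) = GL(m, Z/p^k Z) if and only if their invariant tuples q = (q_1, ..., q_k) coincide, where q_i is the F_p-dimension of μ({h ∈ G : (h, x) ≡ 0 mod p^i for all x ∈ G}). -/
open scoped Matrix

/-- The `i`-th invariant of an alternating bilinear form `B` on `(ℤ/p^kℤ)^m`: the
`𝔽_p`-dimension of the image under `μ : v ↦ p^{k-1}v` (identified with reduction mod `p`)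
of the set of `h` with `B(h, x) ≡ 0 mod p^i` for all `x`. -/
noncomputable def qinv (p k m : ℕ)
    (B : (Fin m → ZMod (p^k)) →ₗ[ZMod (p^k)] (Fin m → ZMod (p^k)) →ₗ[ZMod (p^k)] ZMod (p^k))
    (i : ℕ) : ℕ :=
  Module.finrank (ZMod p) (Submodule.span (ZMod p)
    (Set.image (fun h : Fin m → ZMod (p^k) => fun j => (((h j).val : ℕ) : ZMod p))
      {h | ∀ x, ∃ c, B h x = (p : ZMod (p^k))^i * c}))

/-- The normal form matrix. -/
def nfM {R : Type} [CommRing R] (π : R) (d : ℕ → ℕ) (i j : ℕ) : R :=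
  if i / 2 = j / 2 then (if i < j then π ^ d (i / 2) else if j < i then - π ^ d (i / 2) else 0)
  else 0

/-- The exponent attached to index `j`. -/
def nfE (k m : ℕ) (d : ℕ → ℕ) (j : ℕ) : ℕ := if j / 2 * 2 + 1 < m then d (j / 2) else k

lemma divide_form {R M : Type} [CommRing R] [AddCommGroup M] [Module R M] {n : ℕ}
    (b : Module.Basis (Fin n) R M) (B : M →ₗ[R] M →ₗ[R] R) (hB : ∀ x, B x x = 0) (r : R)
    (h : ∀ x y, r ∣ B x y) :
    ∃ C : M →ₗ[R] M →ₗ[R] R, (∀ x, C x x = 0) ∧ ∀ x y, B x y = r * C x y := by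
  choose c hc using h
  let D : M →ₗ[R] M →ₗ[R] R :=
    Matrix.toLinearMap₂ b b (Matrix.of fun i j => if i < j then c (b i) (b j) else 0)
  have hD : ∀ i j, D (b i) (b j) = if i < j then c (b i) (b j) else 0 := by
    intro i j
    simp only [D, Matrix.toLinearMap₂_apply_basis, Matrix.of_apply]
  have hneg : ∀ x y, B x y = - B y x := by
    intro x y
    have := hB (x + y)
    simp only [map_add, LinearMap.add_apply, hB] at this
    linear_combination this
  refine ⟨D - D.flip, by simp, ?_⟩
  have : B = r • (D - D.flip) := by
    refine b.ext fun i => b.ext fun j => ?_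
    simp only [LinearMap.smul_apply, LinearMap.sub_apply, LinearMap.flip_apply, hD, smul_eq_mul]
    rcases lt_trichotomy i j with h | h | h
    · simp [h, h.not_gt, ← hc]
    · subst h; simp [hB]
    · simp [h, h.not_gt, ← hc, hneg (b i) (b j)]
  intro x y
  conv_lhs => rw [this]
  simp

lemma normal_form {R : Type} [CommRing R] [IsLocalRing R] (π : R) (k : ℕ) (hk : π ^ k = 0)
    (hu : ∀ r : R, π ∣ r ∨ IsUnit r) (n : ℕ) :
    ∀ (M : Type) [AddCommGroup M] [Module R M] [Module.Free R M] [Module.Finite R M],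
      Module.finrank R M = n → ∀ B : M →ₗ[R] M →ₗ[R] R, (∀ x, B x x = 0) →
      ∀ a ≤ k, (∀ x y, π ^ a ∣ B x y) →
      ∃ (b : Module.Basis (Fin n) R M) (d : ℕ → ℕ), Monotone d ∧ (∀ t, a ≤ d t) ∧ (∀ t, d t ≤ k) ∧
        ∀ i j : Fin n, B (b i) (b j) = nfM π d i j := by
  induction n using Nat.strong_induction_on with
  | _ n ih =>
  intro M _ _ _ _ hn B hB a hak ha
  classical
  let b0 : Module.Basis (Fin n) R M := Module.finBasisOfFinrankEq R M hn
  let P : ℕ → Prop := fun a => ∀ x y, π ^ a ∣ B x y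
  obtain ⟨a', haa', ha'k, hPa', hmax⟩ : ∃ a', a ≤ a' ∧ a' ≤ k ∧ P a' ∧ (a' < k → ¬ P (a' + 1)) := by
    refine ⟨Nat.findGreatest P k, Nat.le_findGreatest hak ha, Nat.findGreatest_le k,
      Nat.findGreatest_spec hak ha, fun h => Nat.findGreatest_is_greatest (Nat.lt_succ_self _) h⟩
  rcases ha'k.eq_or_lt with rfl | hlt
  · refine ⟨b0, fun _ => a', monotone_const, fun _ => haa', fun _ => le_rfl, fun i j => ?_⟩
    have := hPa' (b0 i) (b0 j)
    rw [hk, zero_dvd_iff] at this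
    simp [this, nfM, hk]
  · have hnP := hmax hlt
    obtain ⟨C, hC, hBC⟩ := divide_form b0 B hB (π ^ a') hPa'
    simp only [P, not_forall] at hnP
    obtain ⟨e0, f, hef⟩ := hnP
    have hunit : IsUnit (C e0 f) := by
      rcases hu (C e0 f) with ⟨c, hc⟩ | h
      · exfalso
        apply hef
        rw [hBC, hc, pow_succ]
        exact ⟨c, by ring⟩
      · exact h
    obtain ⟨u, hu'⟩ := hunit.exists_left_inv
    obtain ⟨e, he⟩ : ∃ e, e = u • e0 := ⟨_, rfl⟩
    have h1 : C e f = 1 := by simp [he, hu']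
    have hneg : ∀ x y, C x y = - C y x := by
      intro x y
      have := hC (x + y)
      simp only [map_add, LinearMap.add_apply, hC] at this
      linear_combination this
    have h2 : C f e = -1 := by rw [hneg, h1]
    let M' : Submodule R M := LinearMap.ker (C e) ⊓ LinearMap.ker (C f)
    have hM' : ∀ x : M', C e x = 0 ∧ C f x = 0 := fun x => by
      have := x.2
      rw [Submodule.mem_inf, LinearMap.mem_ker, LinearMap.mem_ker] at this
      exact this
    let Φ : ((Fin 2 → R) × M') →ₗ[R] M :=
      LinearMap.coprod (Fintype.linearCombination R ![e, f]) M'.subtype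
    have hΦ : ∀ c x, Φ (c, x) = c 0 • e + c 1 • f + x := by
      intro c x
      simp [Φ, Fintype.linearCombination_apply, Fin.sum_univ_two]
    have hbij : Function.Bijective Φ := by
      constructor
      · rw [← LinearMap.ker_eq_bot, LinearMap.ker_eq_bot']
        rintro ⟨c, x⟩ h
        rw [hΦ] at h
        have e1 := congrArg (C e) h
        have e2 := congrArg (C f) h
        simp [hC, h1, h2, hM' x] at e1 e2
        simp [e1, e2] at h
        ext i
        · fin_cases i <;> simp [e1, e2]
        · simp [h]
      · intro x
        refine ⟨(![- C f x, C e x], ⟨x + C f x • e - C e x • f, ?_⟩), ?_⟩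
        · simp [M', hC, h1, h2]
        · rw [hΦ]; simp
    let Ψ := LinearEquiv.ofBijective Φ hbij
    have hproj : Module.Projective R M' := by
      refine Module.Projective.of_split (M := M) M'.subtype
        ((LinearMap.snd R _ _).comp Ψ.symm.toLinearMap) ?_
      ext x
      have : Ψ (0, x) = x := by simp [Ψ, hΦ]
      simp [← this]
    have hfin : Module.Finite R M' := by
      refine Module.Finite.of_surjective ((LinearMap.snd R _ _).comp Ψ.symm.toLinearMap) ?_
      exact Prod.snd_surjective.comp Ψ.symm.surjective
    have hfree : Module.Free R M' := Module.free_of_flat_of_isLocalRing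
    have hrank := Ψ.finrank_eq
    rw [Module.finrank_prod, hn, Module.finrank_fin_fun] at hrank
    subst hrank
    obtain ⟨b', d', hd'm, hd'a, hd'k, hb'⟩ := ih (Module.finrank R M') (by omega) M' rfl
      ((B.comp M'.subtype).compl₂ M'.subtype) (by simp [hB]) a' ha'k (by
        intro x y; simpa using hPa' x y)
    let b : Module.Basis (Fin (2 + Module.finrank R M')) R M :=
      (((Pi.basisFun R (Fin 2)).prod b').map Ψ).reindex finSumFinEquiv
    refine ⟨b, fun t => if t = 0 then a' else d' (t - 1), ?_, ?_, ?_, ?_⟩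
    · intro s t hst
      dsimp only
      split_ifs
      · exact le_rfl
      · exact hd'a _
      · omega
      · exact hd'm (by omega)
    · intro t
      dsimp only
      split_ifs
      · exact haa'
      · exact haa'.trans (hd'a _)
    · intro t
      dsimp only
      split_ifs
      · exact ha'k
      · exact hd'k _
    · have hl : ∀ i : Fin 2, b (Fin.castAdd _ i) = ![e, f] i := by
        intro i
        have : b (Fin.castAdd _ i) = Φ (Pi.single i 1, 0) := by
          simp [b, Ψ]
        rw [this, hΦ]
        fin_cases i <;> simp
      have hr : ∀ i, b (Fin.natAdd _ i) = b' i := by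
        intro i
        have : b (Fin.natAdd _ i) = Φ (0, b' i) := by
          simp [b, Ψ]
        rw [this, hΦ]
        simp
      intro i j
      induction i using Fin.addCases with
      | left i =>
        induction j using Fin.addCases with
        | left j =>
          rw [hl, hl, hBC]
          fin_cases i <;> fin_cases j <;> simp [nfM, hC, h1, h2]
        | right j =>
          rw [hl, hr, hBC]
          have : nfM π (fun t => if t = 0 then a' else d' (t - 1)) (i : ℕ) (2 + j : ℕ) = 0 := by
            unfold nfM
            rw [if_neg (by omega)]
          simp only [Fin.val_castAdd, Fin.val_natAdd, this]
          fin_cases i <;> simp [hM']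
      | right i =>
        induction j using Fin.addCases with
        | left j =>
          rw [hl, hr, hBC, hneg]
          have : nfM π (fun t => if t = 0 then a' else d' (t - 1)) (2 + i : ℕ) (j : ℕ) = 0 := by
            unfold nfM
            rw [if_neg (by omega)]
          simp only [Fin.val_castAdd, Fin.val_natAdd, this]
          fin_cases j <;> simp [hM']
        | right j =>
          rw [hr, hr]
          have := hb' i j
          simp only [LinearMap.compl₂_apply, LinearMap.comp_apply, Submodule.subtype_apply] at this
          rw [this]
          have q1 : (2 + (i : ℕ)) / 2 = (i : ℕ) / 2 + 1 := by omega
          have q2 : (2 + (j : ℕ)) / 2 = (j : ℕ) / 2 + 1 := by omega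
          simp [nfM, q1, q2]

lemma count_eq {m k : ℕ} (e e' : Fin m → ℕ) (he : Monotone e) (he' : Monotone e')
    (hk' : ∀ j, e' j ≤ k)
    (h : ∀ i, 1 ≤ i → i ≤ k → (Finset.univ.filter fun j => i ≤ e j).card =
      (Finset.univ.filter fun j => i ≤ e' j).card) (j : Fin m) : e' j ≤ e j := by
  by_contra! hlt
  have := h (e' j) (by omega) (hk' j)
  refine absurd this (ne_of_lt (Finset.card_lt_card ?_))
  rw [Finset.ssubset_iff_of_subset]
  · exact ⟨j, by simp, by simpa using hlt⟩
  · intro l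
    simp only [Finset.mem_filter, Finset.mem_univ, true_and]
    intro hl
    apply he'
    by_contra! hlj
    have := he hlj.le
    omega

lemma nfE_mono {k m : ℕ} {d : ℕ → ℕ} (hd : Monotone d) (hk : ∀ t, d t ≤ k) :
    Monotone (fun j : Fin m => nfE k m d j) := by
  intro i j hij
  have hij' : (i : ℕ) ≤ j := hij
  have h2 : (i : ℕ) / 2 ≤ (j : ℕ) / 2 := Nat.div_le_div_right hij'
  simp only [nfE]
  split_ifs
  · exact hd h2
  · exact hk _
  · omega
  · exact le_rfl

lemma nfE_le {k m : ℕ} {d : ℕ → ℕ} (hk : ∀ t, d t ≤ k) (j : ℕ) : nfE k m d j ≤ k := by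
  unfold nfE
  split_ifs
  · exact hk _
  · exact le_rfl

lemma nfM_congr {R : Type} [CommRing R] (π : R) {k m : ℕ} {d d' : ℕ → ℕ}
    (h : ∀ j : Fin m, nfE k m d j = nfE k m d' j) (i j : Fin m) : nfM π d i j = nfM π d' i j := by
  unfold nfM
  have := h i
  have hi := i.2
  have hj := j.2
  unfold nfE at this
  by_cases hij : (i : ℕ) / 2 = (j : ℕ) / 2
  · by_cases hne : (i : ℕ) = j
    · simp [hne]
    · rw [if_pos (by omega), if_pos (by omega)] at this
      rw [this]
  · simp [hij]

lemma qinv_eq (p k m : ℕ) [Fact p.Prime] (hk : 1 ≤ k)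
    (hu : ∀ r : ZMod (p ^ k), (p : ZMod (p ^ k)) ∣ r ∨ IsUnit r)
    (B : (Fin m → ZMod (p^k)) →ₗ[ZMod (p^k)] (Fin m → ZMod (p^k)) →ₗ[ZMod (p^k)] ZMod (p^k))
    (b : Module.Basis (Fin m) (ZMod (p ^ k)) (Fin m → ZMod (p ^ k))) (d : ℕ → ℕ)
    (hb : ∀ i j, B (b i) (b j) = nfM (p : ZMod (p ^ k)) d i j) (i : ℕ) (hik : i ≤ k) :
    qinv p k m B i = (Finset.univ.filter fun j : Fin m => i ≤ nfE k m d j).card := by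
  classical
  have hp : p.Prime := Fact.out
  have hpk : (p : ZMod (p ^ k)) ^ k = 0 := by
    rw [← Nat.cast_pow]
    exact ZMod.natCast_self (p ^ k)
  have hpk' : ∀ s, s < k → (p : ZMod (p ^ k)) ^ s ≠ 0 := by
    intro s hs h
    have : ((p ^ s : ℕ) : ZMod (p ^ k)) = 0 := by simpa using h
    rw [ZMod.natCast_eq_zero_iff] at this
    exact absurd ((Nat.pow_dvd_pow_iff_le_right hp.one_lt).1 this) (by omega)
  have hdvd : p ∣ p ^ k := dvd_pow_self p (by omega)
  have : NeZero (p ^ k) := ⟨(pow_pos hp.pos k).ne'⟩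
  let ρ : ZMod (p ^ k) →+* ZMod p := ZMod.castHom hdvd (ZMod p)
  have hρ : ∀ r, ((r.val : ℕ) : ZMod p) = ρ r := by
    intro r
    simp [ρ, ZMod.natCast_val]
  have hρp : ρ (p : ZMod (p ^ k)) = 0 := by simp
  let μ : (Fin m → ZMod (p ^ k)) → (Fin m → ZMod p) := fun h j => ρ (h j)
  have hμsum : ∀ h, μ h = ∑ l, ρ (b.repr h l) • μ (b l) := by
    intro h
    ext j
    have h1 := congrFun (b.sum_repr h) j
    have h2 := congrArg ρ h1
    simp only [Finset.sum_apply, Pi.smul_apply, smul_eq_mul, map_sum, map_mul] at h2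
    simp only [μ, Finset.sum_apply, Pi.smul_apply, smul_eq_mul]
    exact h2.symm
  have hli : LinearIndependent (ZMod p) (fun j => μ (b j)) := by
    apply linearIndependent_of_top_le_span_of_card_eq_finrank
    · intro v _
      obtain ⟨w, hw⟩ : ∃ w, μ w = v := by
        choose g hg using ZMod.castHom_surjective hdvd
        exact ⟨fun j => g (v j), funext fun j => hg _⟩
      rw [← hw, hμsum]
      exact Submodule.sum_mem _ fun l _ => Submodule.smul_mem _ _ (Submodule.subset_span ⟨l, rfl⟩)
    · simp
  have hspan : Submodule.span (ZMod p)
      (Set.image (fun h : Fin m → ZMod (p^k) => fun j => (((h j).val : ℕ) : ZMod p))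
        {h | ∀ x, ∃ c, B h x = (p : ZMod (p^k))^i * c}) =
      Submodule.span (ZMod p)
        (Set.range fun j : {j : Fin m // i ≤ nfE k m d j} => μ (b j)) := by
    simp only [hρ]
    apply le_antisymm
    · rw [Submodule.span_le]
      rintro _ ⟨h, hh, rfl⟩
      change μ h ∈ _
      rw [hμsum]
      refine Submodule.sum_mem _ fun l _ => ?_
      by_cases hl : i ≤ nfE k m d l
      · exact Submodule.smul_mem _ _ (Submodule.subset_span ⟨⟨l, hl⟩, rfl⟩)
      · have hz : ρ (b.repr h l) = 0 := by
          have hlm := l.2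
          have hpair : (l : ℕ) / 2 * 2 + 1 < m := by
            by_contra hc
            apply hl
            simpa [nfE, hc] using hik
          have hd : d ((l : ℕ) / 2) < i := by
            simpa [nfE, hpair] using hl
          let l' : Fin m := ⟨if (l : ℕ) % 2 = 0 then (l : ℕ) + 1 else (l : ℕ) - 1, by split_ifs <;> omega⟩
          have hl' : (l' : ℕ) = if (l : ℕ) % 2 = 0 then (l : ℕ) + 1 else (l : ℕ) - 1 := rfl
          have hsum : B h (b l') = b.repr h l * nfM (p : ZMod (p ^ k)) d l l' := by
            conv_lhs => rw [← b.sum_repr h]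
            simp only [map_sum, map_smul, LinearMap.sum_apply, LinearMap.smul_apply, hb,
              smul_eq_mul]
            rw [Finset.sum_eq_single l]
            · intro s _ hs
              have hs' : (s : ℕ) ≠ l := fun h => hs (Fin.ext h)
              have : nfM (p : ZMod (p ^ k)) d s l' = 0 := by
                unfold nfM
                by_cases hsl : (s : ℕ) / 2 = (l' : ℕ) / 2
                · have : (s : ℕ) = l' := by
                    rw [hl'] at hsl ⊢
                    split_ifs at hsl ⊢ <;> omega
                  simp [this]
                · simp [hsl]
              simp [this]
            · simp
          obtain ⟨c, hc⟩ := hh (b l')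
          rw [hsum] at hc
          have hc' : ∃ c, b.repr h l * (p : ZMod (p ^ k)) ^ d ((l : ℕ) / 2) =
              (p : ZMod (p ^ k)) ^ i * c := by
            unfold nfM at hc
            have hpos : (l : ℕ) / 2 = (l' : ℕ) / 2 := by rw [hl']; split_ifs <;> omega
            rw [if_pos hpos] at hc
            by_cases hev : (l : ℕ) % 2 = 0
            · rw [if_pos (by rw [hl', if_pos hev]; omega)] at hc
              exact ⟨c, hc⟩
            · rw [if_neg (by rw [hl', if_neg hev]; omega),
                if_pos (by rw [hl', if_neg hev]; omega)] at hc
              exact ⟨-c, by linear_combination -hc⟩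
          obtain ⟨c, hc⟩ := hc'
          rcases hu (b.repr h l) with ⟨s, hs⟩ | hunit
          · rw [hs, map_mul, hρp, zero_mul]
          · exfalso
            obtain ⟨v, hv⟩ := hunit.exists_left_inv
            have hlt : d ((l : ℕ) / 2) < k := by omega
            apply hpk' (k - 1) (by omega)
            have e1 : (p : ZMod (p ^ k)) ^ (k - 1) =
                p ^ (k - 1 - d ((l : ℕ) / 2)) * p ^ (d ((l : ℕ) / 2)) := by
              rw [← pow_add]; congr 1; omega
            have e2 : (p : ZMod (p ^ k)) ^ (k - 1 - d ((l : ℕ) / 2)) * p ^ i = 0 := by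
              rw [← pow_add]
              exact pow_eq_zero_of_le (by omega) hpk
            rw [e1]
            linear_combination (v * (p : ZMod (p ^ k)) ^ (k - 1 - d ((l : ℕ) / 2))) * hc
              + v * c * e2 - ((p : ZMod (p ^ k)) ^ (k - 1 - d ((l : ℕ) / 2)) *
                (p : ZMod (p ^ k)) ^ (d ((l : ℕ) / 2))) * hv
        rw [hz, zero_smul]
        exact Submodule.zero_mem _
    · rw [Submodule.span_le]
      rintro _ ⟨⟨l, hl⟩, rfl⟩
      refine Submodule.subset_span ⟨b l, ?_, rfl⟩
      intro x
      change (p : ZMod (p ^ k)) ^ i ∣ B (b l) x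
      rw [← b.sum_repr x]
      simp only [map_sum, map_smul, hb, smul_eq_mul]
      refine Finset.dvd_sum fun s _ => Dvd.dvd.mul_left ?_ _
      have hlm := l.2
      have hsm := s.2
      unfold nfM
      unfold nfE at hl
      split_ifs with h1 h2 h3
      · rw [if_pos (by omega)] at hl
        exact pow_dvd_pow _ hl
      · rw [if_pos (by omega)] at hl
        exact (pow_dvd_pow _ hl).neg_right
      · exact dvd_zero _
      · exact dvd_zero _
  unfold qinv
  have hli' : LinearIndependent (ZMod p)
      (fun j : {j : Fin m // i ≤ nfE k m d j} => μ (b j)) := hli.comp _ Subtype.val_injective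
  rw [hspan, finrank_span_eq_card hli', Fintype.card_subtype]

theorem stmt7 (p k m : ℕ) (hp : p.Prime) (hk : 1 ≤ k)
    (B B' : (Fin m → ZMod (p^k)) →ₗ[ZMod (p^k)]
      (Fin m → ZMod (p^k)) →ₗ[ZMod (p^k)] ZMod (p^k))
    (hB : ∀ a, B a a = 0) (hB' : ∀ a, B' a a = 0) :
    (∃ α : (Fin m → ZMod (p^k)) ≃ₗ[ZMod (p^k)] (Fin m → ZMod (p^k)),
        ∀ x y, B' (α x) (α y) = B x y) ↔
      (∀ i, 1 ≤ i → i ≤ k → qinv p k m B i = qinv p k m B' i) := by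
  have : Fact p.Prime := ⟨hp⟩
  have : NeZero (p ^ k) := ⟨(pow_pos hp.pos k).ne'⟩
  have : Fact (1 < p ^ k) := ⟨Nat.one_lt_pow (by omega) hp.one_lt⟩
  have hpk : (p : ZMod (p ^ k)) ^ k = 0 := by
    rw [← Nat.cast_pow]
    exact ZMod.natCast_self (p ^ k)
  have hu : ∀ r : ZMod (p ^ k), (p : ZMod (p ^ k)) ∣ r ∨ IsUnit r := by
    intro r
    rw [← ZMod.natCast_zmod_val r]
    by_cases h : p ∣ r.val
    · exact Or.inl (Nat.cast_dvd_cast h)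
    · right
      rw [ZMod.isUnit_iff_coprime]
      exact (Nat.Coprime.pow_left k ((Nat.Prime.coprime_iff_not_dvd hp).2 h)).symm
  have hpn : ¬ IsUnit (p : ZMod (p ^ k)) := by
    intro h
    have := h.pow k
    rw [hpk] at this
    exact not_isUnit_zero this
  have : IsLocalRing (ZMod (p ^ k)) := by
    refine IsLocalRing.of_nonunits_add ?_
    intro a b ha hb
    have ha' := (hu a).resolve_right ha
    have hb' := (hu b).resolve_right hb
    intro hab
    exact hpn (isUnit_of_dvd_unit (dvd_add ha' hb') hab)
  obtain ⟨b, d, hdm, -, hdk, hb⟩ := normal_form (p : ZMod (p ^ k)) k hpk hu m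
    (Fin m → ZMod (p ^ k)) (by simp) B hB 0 (Nat.zero_le _) (by simp)
  obtain ⟨b', d', hdm', -, hdk', hb'⟩ := normal_form (p : ZMod (p ^ k)) k hpk hu m
    (Fin m → ZMod (p ^ k)) (by simp) B' hB' 0 (Nat.zero_le _) (by simp)
  constructor
  · rintro ⟨α, hα⟩ i _ hi
    rw [qinv_eq p k m hk hu B b d hb i hi,
      qinv_eq p k m hk hu B' (b.map α) d (by intro s t; simp [hα, hb]) i hi]
  · intro h
    have hc : ∀ i, 1 ≤ i → i ≤ k → (Finset.univ.filter fun j : Fin m => i ≤ nfE k m d j).card =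
        (Finset.univ.filter fun j : Fin m => i ≤ nfE k m d' j).card := by
      intro i h1 h2
      rw [← qinv_eq p k m hk hu B b d hb i h2, ← qinv_eq p k m hk hu B' b' d' hb' i h2, h i h1 h2]
    have he : ∀ j : Fin m, nfE k m d j = nfE k m d' j := fun j => le_antisymm
      (count_eq _ _ (nfE_mono hdm' hdk') (nfE_mono hdm hdk) (fun j => nfE_le hdk j)
        (fun i h1 h2 => (hc i h1 h2).symm) j)
      (count_eq _ _ (nfE_mono hdm hdk) (nfE_mono hdm' hdk') (fun j => nfE_le hdk' j) hc j)
    refine ⟨b.equiv b' (Equiv.refl _), ?_⟩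
    have : (B'.comp (b.equiv b' (Equiv.refl _)).toLinearMap).compl₂
        (b.equiv b' (Equiv.refl _)).toLinearMap = B := by
      refine b.ext fun s => b.ext fun t => ?_
      simp [hb, hb', nfM_congr _ he]
    intro x y
    conv_rhs => rw [← this]
    simp
end
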